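/- Two-valued parameter, one-sided moment condition: let f_0, f_1 be probability densities on (𝒴, ν) such that f_1(Y)/f_0(Y) has finite variance when Y has density f_0, and let μ^{(n)} = (μ_1,…,μ_n) ∈ {0,1}ⁿ be a sequence of parameter vectors with (Σ_{i=1}^n μ_i)/n → γ ∈ (0,1). Then sup_n E Σ_{i=1}^n (E(M_i | Y_i) − E(M_i | Y_{1:n}))² < ∞, i.e. E‖Δ^S − Δ^{PI}‖² = O(1). -/

import Mathlib

/-!
Write `U = f1 / (f0 + f1)`. Since `(1 - U) f1 = U f0`, exchanging the labels of two positions `i, j`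
gives the detailed-balance identity
`E[M_i (1 - M_j) (1 - U_i) U_j | Y] = E[(1 - M_i) M_j U_i (1 - U_j) | Y]`
(`integral_mul_exch`, `condExp_exch`). Let `k1` be the number of ones, `k0 = n - k1`, and
`c = ∫ f0 f1 / (f0 + f1) dν`. Given `π`, the sums `∑ (1 - M_j) U_j` and `∑ M_j (1 - U_j)` have means
`k0 c` and `k1 c` and variances at most `n` (`integral_sum_sq_le`). Summing the identity over `j`
and replacing these sums by their means gives `M_i = g(Y_i) + X + R` with
`g = U k1 / D`, `D = (1 - U) k0 + U k1`, `E[X | Y] = 0` and `E R² = O(n) / (c min(k0, k1))²`.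

Both conditional expectations of `M_i` differ from `g(Y_i)` by a conditional expectation of `R`, so
`E (E(M_i|Y_i) - E(M_i|Y))² ≤ 4 E R²` (`condExp_diff`), which is `O(1/n)` when `c > 0` and both
label frequencies stay away from `0` (`gap_of_overlap_pos`). If `c = 0`, then `M_i = U(Y_i)` almost
surely and the difference vanishes (`gap_of_overlap_zero`). The finitely many small `n` are covered
by a trivial bound.
-/

open MeasureTheory ProbabilityTheory ENNReal

noncomputable section

instance (n : ℕ) : MeasurableSpace (Equiv.Perm (Fin n)) := ⊤

/-- product measure on `Fin n → 𝓨` with `i`-th coordinate having density `f i` w.r.t. `ν`. -/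
def prodDens {𝓨 : Type*} [MeasurableSpace 𝓨] (ν : Measure 𝓨) {n : ℕ}
    (f : Fin n → 𝓨 → ℝ) : Measure (Fin n → 𝓨) :=
  Measure.pi fun i => ν.withDensity fun y => ENNReal.ofReal (f i y)

/-- the random-permutation Bayesian model: `π` uniform on permutations; given `π`,
the observations are independent with `Y i ∼ f (π i)`. -/
def bayesP {𝓨 : Type*} [MeasurableSpace 𝓨] (ν : Measure 𝓨) {n : ℕ}
    (f : Fin n → 𝓨 → ℝ) : Measure (Equiv.Perm (Fin n) × (Fin n → 𝓨)) :=
  ((Nat.factorial n : ℝ≥0∞))⁻¹ •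
    ∑ π : Equiv.Perm (Fin n), (Measure.dirac π).prod (prodDens ν fun i => f (π i))

/-- `M i = μ_{π(i)}` -/
def Mpar {𝓨 : Type*} {n : ℕ} (μs : Fin n → ℝ) (i : Fin n)
    (ω : Equiv.Perm (Fin n) × (Fin n → 𝓨)) : ℝ := μs (ω.1 i)

/-- the σ-algebra generated by `Y = (Y_1, …, Y_n)` -/
def sigmaY (𝓨 : Type*) [MeasurableSpace 𝓨] (n : ℕ) :
    MeasurableSpace (Equiv.Perm (Fin n) × (Fin n → 𝓨)) :=
  MeasurableSpace.comap Prod.snd inferInstance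

/-- the σ-algebra generated by `Y_i` alone -/
def sigmaYi (𝓨 : Type*) [MeasurableSpace 𝓨] {n : ℕ} (i : Fin n) :
    MeasurableSpace (Equiv.Perm (Fin n) × (Fin n → 𝓨)) :=
  MeasurableSpace.comap (fun ω => ω.2 i) inferInstance

/-- the oracle simple symmetric rule `δ^S(y) = Σ_j μ_j f_j(y) / Σ_j f_j(y)` -/
def deltaS {𝓨 : Type*} {n : ℕ} (μs : Fin n → ℝ) (f : Fin n → 𝓨 → ℝ) (y : 𝓨) : ℝ :=
  (∑ j, μs j * f j y) / (∑ j, f j y)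

/-! ### The permutation model and conditional expectations -/

/-- A finite product of densities is a density of the product measure. -/
lemma prodDens_eq {𝓨 : Type*} [MeasurableSpace 𝓨] (ν : Measure 𝓨) [SigmaFinite ν] {n : ℕ}
    (f : Fin n → 𝓨 → ℝ) (h0 : ∀ i y, 0 ≤ f i y)
    (hi : ∀ i, Integrable (f i) ν) :
    prodDens ν f = (Measure.pi fun _ : Fin n => ν).withDensity
      fun y => ENNReal.ofReal (∏ i, f i (y i)) := by
  unfold prodDens
  have : ∀ i, SigmaFinite (ν.withDensity fun y => ENNReal.ofReal (f i y)) := fun i => by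
    have : IsFiniteMeasure (ν.withDensity fun y => ENNReal.ofReal (f i y)) :=
      isFiniteMeasure_withDensity_ofReal (hi i).2
    infer_instance
  refine Measure.pi_eq fun s hs => ?_
  rw [withDensity_apply _ (MeasurableSet.univ_pi hs), Measure.restrict_pi_pi]
  rw [← ofReal_integral_eq_lintegral_ofReal]
  · rw [integral_fintype_prod_eq_prod (𝕜 := ℝ) (f := f), ENNReal.ofReal_prod_of_nonneg]
    · refine Finset.prod_congr rfl fun i _ => ?_
      rw [withDensity_apply _ (hs i), ofReal_integral_eq_lintegral_ofReal]
      · exact (hi i).integrableOn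
      · exact Filter.Eventually.of_forall fun y => h0 i y
    · exact fun i _ => integral_nonneg fun y => h0 i y
  · exact Integrable.fintype_prod (𝕜 := ℝ) (fun i => (hi i).integrableOn)
  · exact Filter.Eventually.of_forall fun y => Finset.prod_nonneg fun i _ => h0 i _

lemma integral_prodDens {𝓨 : Type*} [MeasurableSpace 𝓨] (ν : Measure 𝓨) [SigmaFinite ν] {n : ℕ}
    (f : Fin n → 𝓨 → ℝ) (hm : ∀ i, Measurable (f i)) (h0 : ∀ i y, 0 ≤ f i y)
    (hi : ∀ i, Integrable (f i) ν) (G : (Fin n → 𝓨) → ℝ) :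
    ∫ y, G y ∂(prodDens ν f) = ∫ y, (∏ i, f i (y i)) * G y ∂(Measure.pi fun _ : Fin n => ν) := by
  rw [prodDens_eq ν f h0 hi, integral_withDensity_eq_integral_toReal_smul]
  · refine integral_congr_ae (Filter.Eventually.of_forall fun y => ?_)
    simp only [smul_eq_mul]
    rw [ENNReal.toReal_ofReal (Finset.prod_nonneg fun i _ => h0 i _)]
  · exact (Finset.measurable_prod _ fun i _ => (hm i).comp (measurable_pi_apply i)).ennreal_ofReal
  · exact Filter.Eventually.of_forall fun y => ENNReal.ofReal_lt_top

lemma isProb_prodDens {𝓨 : Type*} [MeasurableSpace 𝓨] (ν : Measure 𝓨) {n : ℕ}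
    (f : Fin n → 𝓨 → ℝ) (h1 : ∀ i, ∫⁻ y, ENNReal.ofReal (f i y) ∂ν = 1) :
    IsProbabilityMeasure (prodDens ν f) := by
  unfold prodDens
  have : ∀ i, IsProbabilityMeasure (ν.withDensity fun y => ENNReal.ofReal (f i y)) :=
    fun i => ⟨by
      rw [withDensity_apply _ MeasurableSet.univ, Measure.restrict_univ]; exact h1 i⟩
  infer_instance

lemma isProb_bayesP {𝓨 : Type*} [MeasurableSpace 𝓨] (ν : Measure 𝓨) {n : ℕ}
    (f : Fin n → 𝓨 → ℝ) (h1 : ∀ i, ∫⁻ y, ENNReal.ofReal (f i y) ∂ν = 1) :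
    IsProbabilityMeasure (bayesP ν f) := by
  have : ∀ π : Equiv.Perm (Fin n), IsProbabilityMeasure (prodDens ν fun i => f (π i)) :=
    fun π => isProb_prodDens ν _ fun i => h1 _
  constructor
  unfold bayesP
  rw [Measure.smul_apply, Measure.finsetSum_apply]
  simp only [measure_univ, Finset.sum_const, Finset.card_univ, Fintype.card_perm, Fintype.card_fin,
    smul_eq_mul, nsmul_eq_mul, mul_one]
  exact ENNReal.inv_mul_cancel (by exact_mod_cast Nat.factorial_ne_zero n) (by simp)

/-- An expectation in the permutation model is the average over `π` of the expectations given
`π`. -/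
lemma integral_bayesP {𝓨 : Type*} [MeasurableSpace 𝓨] (ν : Measure 𝓨) {n : ℕ}
    (f : Fin n → 𝓨 → ℝ) (h1 : ∀ i, ∫⁻ y, ENNReal.ofReal (f i y) ∂ν = 1)
    (G : Equiv.Perm (Fin n) × (Fin n → 𝓨) → ℝ) (hG : Measurable G) (C : ℝ)
    (hC : ∀ ω, |G ω| ≤ C) :
    ∫ ω, G ω ∂(bayesP ν f) = (Nat.factorial n : ℝ)⁻¹ *
      ∑ π : Equiv.Perm (Fin n), ∫ y, G (π, y) ∂(prodDens ν fun i => f (π i)) := by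
  have : ∀ π : Equiv.Perm (Fin n), IsProbabilityMeasure (prodDens ν fun i => f (π i)) :=
    fun π => isProb_prodDens ν _ fun i => h1 _
  unfold bayesP
  rw [integral_smul_measure, integral_finsetSum_measure]
  · simp only [ENNReal.toReal_inv, ENNReal.toReal_natCast, smul_eq_mul]
    congr 1
    refine Finset.sum_congr rfl fun π _ => ?_
    rw [Measure.dirac_prod, integral_map measurable_prodMk_left.aemeasurable
      hG.aestronglyMeasurable]
  · exact fun π _ => Integrable.of_bound hG.aestronglyMeasurable C
      (Filter.Eventually.of_forall fun ω => hC ω)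

lemma measurable_param {𝓨 : Type*} [MeasurableSpace 𝓨] {n : ℕ} (m : Fin n → ℝ) (l : Fin n) :
    Measurable fun ω : Equiv.Perm (Fin n) × (Fin n → 𝓨) => m (ω.1 l) :=
  (measurable_from_top (f := fun π : Equiv.Perm (Fin n) => m (π l))).comp measurable_fst

/-- Conditioning does not increase the second moment. -/
lemma integral_condExp_sq_le {Ω : Type*} {m m0 : MeasurableSpace Ω} (P : Measure Ω)
    [IsProbabilityMeasure P] (hm : m ≤ m0) (R : Ω → ℝ) (hR : MemLp R 2 P) :
    ∫ ω, (P[R|m] ω) ^ 2 ∂P ≤ ∫ ω, (R ω) ^ 2 ∂P := by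
  rw [← integral_condExp hm (f := fun ω => R ω ^ 2)]
  refine integral_mono_ae (hR.condExp one_le_two).integrable_sq integrable_condExp ?_
  have h1 := condVar_ae_eq_condExp_sq_sub_sq_condExp hm hR
  have h2 : 0 ≤ᵐ[P] Var[R; P | m] :=
    condExp_nonneg (Filter.Eventually.of_forall fun ω => sq_nonneg _)
  filter_upwards [h1, h2] with ω h h'
  rw [h] at h'
  simp only [Pi.zero_apply, Pi.sub_apply, Pi.pow_apply] at h'
  have : (R ^ 2 : Ω → ℝ) = fun ω => R ω ^ 2 := rfl
  rw [this] at h'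
  linarith

/-- If `M = g + X + R`, where `g` is measurable for the coarser σ-algebra `m1` and `X` has zero
conditional expectation given the finer one `m2`, then only `R` separates `E(M|m1)` from
`E(M|m2)`. -/
lemma condExp_diff {Ω : Type*} {m1 m2 m0 : MeasurableSpace Ω} (P : Measure Ω)
    [IsProbabilityMeasure P] (h12 : m1 ≤ m2) (h2 : m2 ≤ m0) (M g X R : Ω → ℝ)
    (hM : M = g + X + R) (hg : StronglyMeasurable[m1] g) (hgi : Integrable g P)
    (hXi : Integrable X P) (hR : MemLp R 2 P) (hX : P[X|m2] =ᵐ[P] 0) :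
    Integrable (fun ω => (P[M|m1] ω - P[M|m2] ω) ^ 2) P ∧
      ∫ ω, (P[M|m1] ω - P[M|m2] ω) ^ 2 ∂P ≤ 4 * ∫ ω, (R ω) ^ 2 ∂P := by
  have hRi : Integrable R P := hR.integrable one_le_two
  have hX1 : P[X|m1] =ᵐ[P] 0 := by
    refine (condExp_condExp_of_le h12 h2).symm.trans ((condExp_congr_ae hX).trans ?_)
    simp
  have e : ∀ m, m ≤ m0 → StronglyMeasurable[m] g → P[X|m] =ᵐ[P] 0 →
      ∀ᵐ ω ∂P, P[M|m] ω = g ω + P[R|m] ω := by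
    intro m hm hgm hXm
    rw [hM]
    have a1 := condExp_add (hgi.add hXi) hRi m
    have a2 := condExp_add hgi hXi m
    have a3 := condExp_of_stronglyMeasurable hm hgm hgi
    filter_upwards [a1, a2, hXm] with ω b1 b2 b3
    simp only [Pi.add_apply, Pi.zero_apply] at b1 b2 b3
    rw [b1, b2, b3, a3]; ring
  have e1 := e m1 (h12.trans h2) hg hX1
  have e2 := e m2 h2 (hg.mono h12) hX
  have L1 : MemLp (P[R|m1]) 2 P := hR.condExp one_le_two
  have L2 : MemLp (P[R|m2]) 2 P := hR.condExp one_le_two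
  have ee : (fun ω => (P[M|m1] ω - P[M|m2] ω) ^ 2) =ᵐ[P]
      fun ω => (P[R|m1] ω - P[R|m2] ω) ^ 2 := by
    filter_upwards [e1, e2] with ω b1 b2
    rw [b1, b2]; ring
  have I : Integrable (fun ω => (P[R|m1] ω - P[R|m2] ω) ^ 2) P := (L1.sub L2).integrable_sq
  refine ⟨I.congr ee.symm, ?_⟩
  rw [integral_congr_ae ee]
  have J1 := L1.integrable_sq
  have J2 := L2.integrable_sq
  calc ∫ ω, (P[R|m1] ω - P[R|m2] ω) ^ 2 ∂P
      ≤ ∫ ω, (2 * (P[R|m1] ω) ^ 2 + 2 * (P[R|m2] ω) ^ 2) ∂P := by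
        refine integral_mono I ((J1.const_mul 2).add (J2.const_mul 2)) fun ω => ?_
        change (P[R|m1] ω - P[R|m2] ω) ^ 2 ≤ 2 * (P[R|m1] ω) ^ 2 + 2 * (P[R|m2] ω) ^ 2
        nlinarith [sq_nonneg (P[R|m1] ω + P[R|m2] ω)]
    _ = 2 * ∫ ω, (P[R|m1] ω) ^ 2 ∂P + 2 * ∫ ω, (P[R|m2] ω) ^ 2 ∂P := by
        rw [integral_add (J1.const_mul 2) (J2.const_mul 2), integral_const_mul,
          integral_const_mul]
    _ ≤ _ := by
        have := integral_condExp_sq_le P (h12.trans h2) R hR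
        have := integral_condExp_sq_le P h2 R hR
        linarith

/-- Given `π`, the sum `∑ l, ψ (π l) (Y l)` has independent bounded terms and a mean that does not
depend on `π`; hence its variance is at most `n`. -/
lemma integral_sum_sq_le {𝓨 : Type*} [MeasurableSpace 𝓨] (ν : Measure 𝓨) {n : ℕ}
    (f : Fin n → 𝓨 → ℝ) (h1 : ∀ i, ∫⁻ y, ENNReal.ofReal (f i y) ∂ν = 1)
    (ψ : Fin n → 𝓨 → ℝ) (hψm : ∀ j, Measurable (ψ j)) (hψ : ∀ j y, ψ j y ∈ Set.Icc (0 : ℝ) 1)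
    (hψM : Measurable fun ω : Equiv.Perm (Fin n) × (Fin n → 𝓨) => ∑ l, ψ (ω.1 l) (ω.2 l))
    (e : ℝ) (he : e = ∑ j, ∫ y, ψ j y ∂(ν.withDensity fun y => ENNReal.ofReal (f j y))) :
    ∫ ω, (∑ l, ψ (ω.1 l) (ω.2 l) - e) ^ 2 ∂(bayesP ν f) ≤ n := by
  have : ∀ i, IsProbabilityMeasure (ν.withDensity fun y => ENNReal.ofReal (f i y)) :=
    fun i => ⟨by
      rw [withDensity_apply _ MeasurableSet.univ, Measure.restrict_univ]; exact h1 i⟩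
  have hb : ∀ ω : Equiv.Perm (Fin n) × (Fin n → 𝓨),
      |(∑ l, ψ (ω.1 l) (ω.2 l) - e) ^ 2| ≤ (n + |e|) ^ 2 := by
    intro ω
    rw [abs_pow]
    refine pow_le_pow_left₀ (abs_nonneg _) ?_ 2
    refine (abs_sub _ _).trans (add_le_add_left ?_ _)
    rw [abs_of_nonneg (Finset.sum_nonneg fun l _ => (hψ _ _).1)]
    refine (Finset.sum_le_sum fun l _ => (hψ (ω.1 l) (ω.2 l)).2).trans ?_
    simp
  rw [integral_bayesP ν f h1 _ ((hψM.sub_const e).pow_const 2) _ hb]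
  have key : ∀ π : Equiv.Perm (Fin n),
      ∫ y, (∑ l, ψ (π l) (y l) - e) ^ 2 ∂(prodDens ν fun i => f (π i)) ≤ n := by
    intro π
    have hint : ∀ l, MemLp (ψ (π l)) 2 (ν.withDensity fun y => ENNReal.ofReal (f (π l) y)) :=
      fun l => MemLp.of_bound (hψm _).aestronglyMeasurable 1
        (Filter.Eventually.of_forall fun y => by
          rw [Real.norm_of_nonneg (hψ _ _).1]; exact (hψ _ _).2)
    have hv := variance_sum_pi (X := fun l => ψ (π l))
      (μ := fun l => ν.withDensity fun y => ENNReal.ofReal (f (π l) y)) hint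
    have hmean : ∫ y, ∑ l, ψ (π l) (y l) ∂(prodDens ν fun i => f (π i)) = e := by
      rw [integral_finsetSum, he, ← Equiv.sum_comp π fun j =>
        ∫ y, ψ j y ∂(ν.withDensity fun y => ENNReal.ofReal (f j y))]
      · refine Finset.sum_congr rfl fun l _ => ?_
        exact integral_comp_eval (X := fun _ : Fin n => 𝓨)
          (μ := fun l => ν.withDensity fun y => ENNReal.ofReal (f (π l) y)) (i := l)
          (f := ψ (π l)) (hψm _).aestronglyMeasurable
      · intro l _
        exact integrable_comp_eval ((hint l).integrable one_le_two)
    have hvar2 : ∫ y, (∑ l, ψ (π l) (y l) - e) ^ 2 ∂(prodDens ν fun i => f (π i)) =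
        Var[∑ l, fun y : Fin n → 𝓨 => ψ (π l) (y l); prodDens ν fun i => f (π i)] := by
      rw [variance_eq_integral]
      · simp only [Finset.sum_apply]
        rw [hmean]
      · have : Measurable (∑ l, fun y : Fin n → 𝓨 => ψ (π l) (y l)) :=
          Finset.sum_induction _ _ (fun _ _ => Measurable.add) measurable_const
            fun l _ => (hψm _).comp (measurable_pi_apply l)
        exact this.aemeasurable
    rw [hvar2]
    unfold prodDens
    rw [hv]
    refine (Finset.sum_le_sum (g := fun _ => (1 : ℝ)) fun l _ => ?_).trans (by simp)
    refine (variance_le_sq_of_bounded (a := 0) (b := 1)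
      (Filter.Eventually.of_forall fun y => hψ _ y) (hψm _).aemeasurable).trans (by norm_num)
  have := Finset.sum_le_sum fun π (_ : π ∈ Finset.univ) => key π
  rw [Finset.sum_const, Finset.card_univ, Fintype.card_perm, Fintype.card_fin, nsmul_eq_mul] at this
  have hf : (0 : ℝ) < (Nat.factorial n : ℝ) := by exact_mod_cast Nat.factorial_pos n
  rw [inv_mul_le_iff₀ hf]
  exact this

/-! ### Exchanging two labels -/

/-- The density of the `j`-th observation for the parameter vector `m`. -/
abbrev dens {𝓨 : Type*} {n : ℕ} (m : Fin n → ℝ) (f0 f1 : 𝓨 → ℝ) : Fin n → 𝓨 → ℝ :=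
  fun j y => if m j = 1 then f1 y else f0 y

/-- The posterior probability of `f1` against `f0` under equal prior weights. It is `0` where both
densities vanish. -/
def post {𝓨 : Type*} (f0 f1 : 𝓨 → ℝ) (y : 𝓨) : ℝ := f1 y / (f0 y + f1 y)

section

variable {𝓨 : Type*} {f0 f1 : 𝓨 → ℝ}

lemma post_mem (h0 : ∀ y, 0 ≤ f0 y) (h1 : ∀ y, 0 ≤ f1 y) (y : 𝓨) :
    post f0 f1 y ∈ Set.Icc (0 : ℝ) 1 :=
  ⟨div_nonneg (h1 y) (add_nonneg (h0 y) (h1 y)),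
    div_le_one_of_le₀ (by linarith [h0 y]) (add_nonneg (h0 y) (h1 y))⟩

/-- Detailed balance: both sides equal `f0 f1 / (f0 + f1)`. -/
lemma post_balance (h0 : ∀ y, 0 ≤ f0 y) (h1 : ∀ y, 0 ≤ f1 y) (y : 𝓨) :
    f1 y * (1 - post f0 f1 y) = f0 y * post f0 f1 y := by
  unfold post
  rcases eq_or_ne (f0 y + f1 y) 0 with h | h
  · have a : f1 y = 0 := by linarith [h0 y, h1 y]
    simp [a]
  · field_simp
    ring

/-- The effect of interchanging the labels of positions `i` and `j` when these are `0` and `1`. -/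
lemma prod_swap {n : ℕ} (m : Fin n → ℝ) (h0 : ∀ y, 0 ≤ f0 y) (h1 : ∀ y, 0 ≤ f1 y)
    (π : Equiv.Perm (Fin n)) {i j : Fin n} (hij : i ≠ j) (hi : m (π i) = 0) (hj : m (π j) = 1)
    (y : Fin n → 𝓨) :
    (∏ l, dens m f0 f1 (π (Equiv.swap i j l)) (y l)) *
        ((1 - post f0 f1 (y i)) * post f0 f1 (y j)) =
      (∏ l, dens m f0 f1 (π l) (y l)) * (post f0 f1 (y i) * (1 - post f0 f1 (y j))) := by
  have sp : ∀ G : Fin n → ℝ, ∏ l, G l =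
      G i * (G j * ∏ l ∈ (Finset.univ.erase i).erase j, G l) := fun G => by
    rw [Finset.mul_prod_erase _ G (Finset.mem_erase.2 ⟨hij.symm, Finset.mem_univ _⟩),
      Finset.mul_prod_erase _ G (Finset.mem_univ _)]
  rw [sp, sp]
  have rest : ∏ l ∈ (Finset.univ.erase i).erase j, dens m f0 f1 (π (Equiv.swap i j l)) (y l) =
      ∏ l ∈ (Finset.univ.erase i).erase j, dens m f0 f1 (π l) (y l) := by
    refine Finset.prod_congr rfl fun l hl => ?_
    simp only [Finset.mem_erase] at hl
    rw [Equiv.swap_apply_of_ne_of_ne hl.2.1 hl.1]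
  rw [rest, Equiv.swap_apply_left, Equiv.swap_apply_right]
  simp only [dens, hi, hj, if_true, zero_ne_one, if_false]
  have bi := post_balance h0 h1 (y i)
  have bj := post_balance h0 h1 (y j)
  linear_combination (f0 (y j) * post f0 f1 (y j) *
      ∏ l ∈ (Finset.univ.erase i).erase j, dens m f0 f1 (π l) (y l)) * bi
    - (f0 (y i) * post f0 f1 (y i) *
      ∏ l ∈ (Finset.univ.erase i).erase j, dens m f0 f1 (π l) (y l)) * bj

/-- The signed exchange statistic of the positions `i` and `j`: its first term is carried by the
states with `M_i = 1`, `M_j = 0` and the second one by those with `M_i = 0`, `M_j = 1`, with weights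
making the two have the same conditional expectation given `Y`. -/
def exch {n : ℕ} (f0 f1 : 𝓨 → ℝ) (m : Fin n → ℝ) (i j : Fin n)
    (ω : Equiv.Perm (Fin n) × (Fin n → 𝓨)) : ℝ :=
  m (ω.1 i) * (1 - m (ω.1 j)) * ((1 - post f0 f1 (ω.2 i)) * post f0 f1 (ω.2 j))
    - (1 - m (ω.1 i)) * m (ω.1 j) * (post f0 f1 (ω.2 i) * (1 - post f0 f1 (ω.2 j)))

lemma abs_exch_le (h0 : ∀ y, 0 ≤ f0 y) (h1 : ∀ y, 0 ≤ f1 y) {n : ℕ} (m : Fin n → ℝ)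
    (hm : ∀ j, m j = 0 ∨ m j = 1) (i j : Fin n) (ω : Equiv.Perm (Fin n) × (Fin n → 𝓨)) :
    |exch f0 f1 m i j ω| ≤ 1 := by
  obtain ⟨a0, a1⟩ := post_mem h0 h1 (ω.2 i)
  obtain ⟨b0, b1⟩ := post_mem h0 h1 (ω.2 j)
  unfold exch
  rw [abs_le]
  rcases hm (ω.1 i) with hi | hi <;> rcases hm (ω.1 j) with hj | hj <;> rw [hi, hj] <;>
    constructor <;> nlinarith [mul_nonneg a0 (sub_nonneg.2 b1), mul_nonneg b0 (sub_nonneg.2 a1),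
      mul_nonneg a0 b0, mul_nonneg (sub_nonneg.2 a1) (sub_nonneg.2 b1)]

variable [MeasurableSpace 𝓨]

lemma measurable_post (m0 : Measurable f0) (m1 : Measurable f1) : Measurable (post f0 f1) :=
  m1.div (m0.add m1)

lemma integral_dens (ν : Measure 𝓨) {f : 𝓨 → ℝ} (hm : Measurable f) (h0 : ∀ y, 0 ≤ f y)
    (g : 𝓨 → ℝ) :
    ∫ y, g y ∂(ν.withDensity fun y => ENNReal.ofReal (f y)) = ∫ y, f y * g y ∂ν := by
  rw [integral_withDensity_eq_integral_toReal_smul hm.ennreal_ofReal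
    (Filter.Eventually.of_forall fun y => ENNReal.ofReal_lt_top)]
  simp only [smul_eq_mul, ENNReal.toReal_ofReal (h0 _)]

lemma overlap_symm (ν : Measure 𝓨) (m0 : Measurable f0) (m1 : Measurable f1)
    (h0 : ∀ y, 0 ≤ f0 y) (h1 : ∀ y, 0 ≤ f1 y) :
    ∫ y, (1 - post f0 f1 y) ∂(ν.withDensity fun y => ENNReal.ofReal (f1 y)) =
      ∫ y, post f0 f1 y ∂(ν.withDensity fun y => ENNReal.ofReal (f0 y)) := by
  rw [integral_dens ν m0 h0, integral_dens ν m1 h1]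
  simp only [post_balance h0 h1]

lemma integrable_of_lintegral_one (ν : Measure 𝓨) {f : 𝓨 → ℝ} (hm : Measurable f)
    (h0 : ∀ y, 0 ≤ f y) (h : ∫⁻ y, ENNReal.ofReal (f y) ∂ν = 1) : Integrable f ν :=
  ⟨hm.aestronglyMeasurable, by
    rw [hasFiniteIntegral_iff_ofReal (Filter.Eventually.of_forall h0), h]; simp⟩

lemma measurable_exch (m0 : Measurable f0) (m1 : Measurable f1) {n : ℕ} (m : Fin n → ℝ)
    (i j : Fin n) : Measurable (exch f0 f1 m i j) := by
  have a := measurable_param (𝓨 := 𝓨) m i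
  have b := measurable_param (𝓨 := 𝓨) m j
  have p := measurable_post m0 m1
  have u : ∀ l, Measurable fun ω : Equiv.Perm (Fin n) × (Fin n → 𝓨) => post f0 f1 (ω.2 l) :=
    fun l => p.comp ((measurable_pi_apply l).comp measurable_snd)
  exact ((a.mul (b.const_sub 1)).mul (((u i).const_sub 1).mul (u j))).sub
    (((a.const_sub 1).mul b).mul ((u i).mul ((u j).const_sub 1)))

/-- The exchange statistic is orthogonal to every bounded function of `Y`: composing `π` with the
transposition of `i` and `j` reverses its sign. -/
lemma integral_mul_exch (ν : Measure 𝓨) [SigmaFinite ν] (m0 : Measurable f0) (m1 : Measurable f1)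
    (h0 : ∀ y, 0 ≤ f0 y) (h1 : ∀ y, 0 ≤ f1 y)
    (p0 : ∫⁻ y, ENNReal.ofReal (f0 y) ∂ν = 1) (p1 : ∫⁻ y, ENNReal.ofReal (f1 y) ∂ν = 1)
    {n : ℕ} (m : Fin n → ℝ) (hm : ∀ j, m j = 0 ∨ m j = 1) (i j : Fin n)
    (h : (Fin n → 𝓨) → ℝ) (hh : Measurable h) (C : ℝ) (hC : ∀ y, |h y| ≤ C) :
    ∫ ω, h ω.2 * exch f0 f1 m i j ω ∂(bayesP ν (dens m f0 f1)) = 0 := by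
  have hp : ∀ l, ∫⁻ y, ENNReal.ofReal (dens m f0 f1 l y) ∂ν = 1 := fun l => by
    unfold dens; split_ifs <;> assumption
  have hd0 : ∀ l y, 0 ≤ dens m f0 f1 l y := fun l y => by
    unfold dens; split_ifs <;> simp [h0, h1]
  have hdm : ∀ l, Measurable (dens m f0 f1 l) := fun l => by
    unfold dens; split_ifs <;> assumption
  have hdi : ∀ l, Integrable (dens m f0 f1 l) ν := fun l =>
    integrable_of_lintegral_one ν (hdm l) (hd0 l) (hp l)
  rcases eq_or_ne i j with rfl | hij
  · have : ∀ ω, h ω.2 * exch f0 f1 m i i ω = 0 := fun ω => by unfold exch; ring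
    simp [this]
  rw [integral_bayesP ν _ hp (fun ω => h ω.2 * exch f0 f1 m i j ω)
    ((hh.comp measurable_snd).mul (measurable_exch m0 m1 m i j)) C]
  swap
  · intro ω
    rw [abs_mul]
    have := abs_exch_le h0 h1 m hm i j ω
    have hc := hC ω.2
    nlinarith [abs_nonneg (h ω.2), abs_nonneg (exch f0 f1 m i j ω)]
  have hI : ∀ π : Equiv.Perm (Fin n),
      ∫ y, h y * exch f0 f1 m i j (π, y) ∂(prodDens ν fun l => dens m f0 f1 (π l)) =
      ∫ y, (∏ l, dens m f0 f1 (π l) (y l)) * (h y * exch f0 f1 m i j (π, y))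
        ∂(Measure.pi fun _ : Fin n => ν) := fun π =>
    integral_prodDens ν _ (fun _ => hdm _) (fun _ => hd0 _) (fun _ => hdi _) _
  simp only [hI]
  set I : Equiv.Perm (Fin n) → ℝ := fun π =>
      ∫ y, (∏ l, dens m f0 f1 (π l) (y l)) * (h y * exch f0 f1 m i j (π, y))
        ∂(Measure.pi fun _ : Fin n => ν) with hIdef
  have anti : ∀ π, I (π * Equiv.swap i j) = - I π := by
    intro π
    simp only [hIdef]
    rw [← integral_neg]
    congr 1
    funext y
    simp only [Equiv.Perm.mul_apply, exch, Equiv.swap_apply_left, Equiv.swap_apply_right]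
    rcases hm (π i) with hi | hi <;> rcases hm (π j) with hj | hj
    · rw [hi, hj]; ring
    · have := prod_swap m h0 h1 π hij hi hj y
      rw [hi, hj]
      linear_combination h y * this
    · have := prod_swap m h0 h1 π hij.symm hj hi y
      rw [Equiv.swap_comm] at this
      rw [hi, hj]
      linear_combination - h y * this
    · rw [hi, hj]; ring
  have s1 : ∑ π, I (π * Equiv.swap i j) = ∑ π, I π :=
    Equiv.sum_comp (Equiv.mulRight (Equiv.swap i j)) I
  simp only [anti, Finset.sum_neg_distrib] at s1
  have : ∑ π, I π = 0 := by linarith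
  rw [this, mul_zero]

end

/-! ### The gap of one coordinate -/

section

variable {𝓨 : Type*} [MeasurableSpace 𝓨] {f0 f1 : 𝓨 → ℝ}

lemma sigmaYi_le_sigmaY {n : ℕ} (i : Fin n) : sigmaYi 𝓨 i ≤ sigmaY 𝓨 n := by
  unfold sigmaYi sigmaY
  have : (fun ω : Equiv.Perm (Fin n) × (Fin n → 𝓨) => ω.2 i) = (fun y => y i) ∘ Prod.snd := rfl
  rw [this, ← MeasurableSpace.comap_comp]
  exact MeasurableSpace.comap_mono (measurable_pi_apply i).comap_le

lemma sigmaY_le {n : ℕ} : sigmaY 𝓨 n ≤ Prod.instMeasurableSpace :=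
  measurable_snd.comap_le

/-- Multiplied by a bounded function of `Y`, the exchange statistic has zero conditional
expectation given `Y`. -/
lemma condExp_exch (ν : Measure 𝓨) [SigmaFinite ν] (m0 : Measurable f0) (m1 : Measurable f1)
    (h0 : ∀ y, 0 ≤ f0 y) (h1 : ∀ y, 0 ≤ f1 y)
    (p0 : ∫⁻ y, ENNReal.ofReal (f0 y) ∂ν = 1) (p1 : ∫⁻ y, ENNReal.ofReal (f1 y) ∂ν = 1)
    {n : ℕ} (m : Fin n → ℝ) (hm : ∀ j, m j = 0 ∨ m j = 1) (i j : Fin n)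
    (h : (Fin n → 𝓨) → ℝ) (hh : Measurable h) (C : ℝ) (hC : ∀ y, |h y| ≤ C) :
    Integrable (fun ω => h ω.2 * exch f0 f1 m i j ω) (bayesP ν (dens m f0 f1)) ∧
    (bayesP ν (dens m f0 f1))[fun ω => h ω.2 * exch f0 f1 m i j ω|sigmaY 𝓨 n]
      =ᵐ[bayesP ν (dens m f0 f1)] 0 := by
  have hp : ∀ l, ∫⁻ y, ENNReal.ofReal (dens m f0 f1 l y) ∂ν = 1 := fun l => by
    unfold dens; split_ifs <;> assumption
  have := isProb_bayesP ν _ hp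
  have hi : Integrable (fun ω => h ω.2 * exch f0 f1 m i j ω) (bayesP ν (dens m f0 f1)) := by
    refine Integrable.of_bound
      ((hh.comp measurable_snd).mul (measurable_exch m0 m1 m i j)).aestronglyMeasurable C
      (Filter.Eventually.of_forall fun ω => ?_)
    rw [Real.norm_eq_abs, abs_mul]
    have := abs_exch_le h0 h1 m hm i j ω
    have hc := hC ω.2
    nlinarith [abs_nonneg (h ω.2), abs_nonneg (exch f0 f1 m i j ω)]
  refine ⟨hi, ?_⟩
  symm
  refine ae_eq_condExp_of_forall_setIntegral_eq sigmaY_le hi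
    (fun s _ _ => integrableOn_zero) ?_ aestronglyMeasurable_zero
  rintro s ⟨t, ht, rfl⟩ -
  refine Eq.trans (b := (0 : ℝ)) (by simp) (Eq.symm ?_)
  rw [← integral_indicator (measurable_snd ht)]
  have e : (Prod.snd ⁻¹' t).indicator (fun ω => h ω.2 * exch f0 f1 m i j ω) =
      fun ω => t.indicator h ω.2 * exch f0 f1 m i j ω := by
    funext ω
    by_cases hω : ω.2 ∈ t
    · rw [Set.indicator_of_mem (show ω ∈ Prod.snd ⁻¹' t from hω), Set.indicator_of_mem hω]
    · rw [Set.indicator_of_notMem (show ω ∉ Prod.snd ⁻¹' t from hω), Set.indicator_of_notMem hω,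
        zero_mul]
  rw [e, integral_mul_exch ν m0 m1 h0 h1 p0 p1 m hm i j _ (hh.indicator ht) C]
  intro y
  by_cases hy : y ∈ t
  · rw [Set.indicator_of_mem hy]; exact hC y
  · rw [Set.indicator_of_notMem hy, abs_zero]; exact (abs_nonneg _).trans (hC y)

/-- The squared distance between the two conditional expectations of `M_i`. -/
abbrev gap (ν : Measure 𝓨) {n : ℕ} (m : Fin n → ℝ) (f0 f1 : 𝓨 → ℝ) (i : Fin n)
    (ω : Equiv.Perm (Fin n) × (Fin n → 𝓨)) : ℝ :=
  (((bayesP ν (dens m f0 f1))[Mpar m i|sigmaYi 𝓨 i]) ω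
    - ((bayesP ν (dens m f0 f1))[Mpar m i|sigmaY 𝓨 n]) ω) ^ 2

lemma integral_dens_coord (ν : Measure 𝓨) (m0 : Measurable f0) (m1 : Measurable f1)
    (h0 : ∀ y, 0 ≤ f0 y) (h1 : ∀ y, 0 ≤ f1 y)
    {n : ℕ} (m : Fin n → ℝ) (hm : ∀ j, m j = 0 ∨ m j = 1) (c : ℝ)
    (hc : c = ∫ y, post f0 f1 y ∂(ν.withDensity fun y => ENNReal.ofReal (f0 y))) (j : Fin n) :
    ∫ y, (1 - m j) * post f0 f1 y ∂(ν.withDensity fun y => ENNReal.ofReal (dens m f0 f1 j y))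
        = (1 - m j) * c ∧
      ∫ y, m j * (1 - post f0 f1 y) ∂(ν.withDensity fun y => ENNReal.ofReal (dens m f0 f1 j y))
        = m j * c := by
  have hs := overlap_symm ν m0 m1 h0 h1
  rw [integral_const_mul, integral_const_mul]
  rcases hm j with hj | hj
  · simp [dens, hj, hc]
  · simp [dens, hj, hc, hs]

/-- A bound valid for every label vector, used when one of the two labels is rare. -/
lemma gap_trivial (ν : Measure 𝓨)
    (p0 : ∫⁻ y, ENNReal.ofReal (f0 y) ∂ν = 1) (p1 : ∫⁻ y, ENNReal.ofReal (f1 y) ∂ν = 1)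
    {n : ℕ} (m : Fin n → ℝ) (hm : ∀ j, m j = 0 ∨ m j = 1) (i : Fin n) :
    Integrable (gap ν m f0 f1 i) (bayesP ν (dens m f0 f1)) ∧
      ∫ ω, gap ν m f0 f1 i ω ∂(bayesP ν (dens m f0 f1)) ≤ 4 := by
  have hp : ∀ l, ∫⁻ y, ENNReal.ofReal (dens m f0 f1 l y) ∂ν = 1 := fun l => by
    unfold dens; split_ifs <;> assumption
  have := isProb_bayesP ν _ hp
  have hb : ∀ ω : Equiv.Perm (Fin n) × (Fin n → 𝓨), ‖Mpar m i ω‖ ≤ 1 := fun ω => by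
    unfold Mpar; rcases hm (ω.1 i) with h | h <;> simp [h]
  have hR : MemLp (Mpar m i) 2 (bayesP ν (dens m f0 f1)) :=
    MemLp.of_bound (measurable_param m i).aestronglyMeasurable 1 (Filter.Eventually.of_forall hb)
  obtain ⟨a, b⟩ := condExp_diff (bayesP ν (dens m f0 f1)) (sigmaYi_le_sigmaY i) sigmaY_le
    (Mpar m i) 0 0 (Mpar m i) (by simp) stronglyMeasurable_zero (integrable_zero _ _ _)
    (integrable_zero _ _ _) hR (by simp)
  refine ⟨a, b.trans ?_⟩
  have : ∫ ω, (Mpar m i ω) ^ 2 ∂(bayesP ν (dens m f0 f1)) ≤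
      ∫ ω, (1 : ℝ) ∂(bayesP ν (dens m f0 f1)) := by
    refine integral_mono hR.integrable_sq (integrable_const _) fun ω => ?_
    have := hb ω
    rw [Real.norm_eq_abs] at this
    exact (sq_le_one_iff_abs_le_one _).2 this
  rw [integral_const] at this
  simp only [probReal_univ, smul_eq_mul, mul_one] at this
  linarith

/-- If `f0` and `f1` do not overlap, then `M_i` is almost surely a function of `Y_i`. -/
lemma gap_of_overlap_zero (ν : Measure 𝓨) (m0 : Measurable f0) (m1 : Measurable f1)
    (h0 : ∀ y, 0 ≤ f0 y) (h1 : ∀ y, 0 ≤ f1 y)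
    (p0 : ∫⁻ y, ENNReal.ofReal (f0 y) ∂ν = 1) (p1 : ∫⁻ y, ENNReal.ofReal (f1 y) ∂ν = 1)
    (hc : ∫ y, post f0 f1 y ∂(ν.withDensity fun y => ENNReal.ofReal (f0 y)) = 0)
    {n : ℕ} (m : Fin n → ℝ) (hm : ∀ j, m j = 0 ∨ m j = 1) (i : Fin n) :
    ∫ ω, gap ν m f0 f1 i ω ∂(bayesP ν (dens m f0 f1)) ≤ 0 := by
  have hp : ∀ l, ∫⁻ y, ENNReal.ofReal (dens m f0 f1 l y) ∂ν = 1 := fun l => by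
    unfold dens; split_ifs <;> assumption
  have := isProb_bayesP ν _ hp
  have hpd : ∀ l, IsProbabilityMeasure
      (ν.withDensity fun y => ENNReal.ofReal (dens m f0 f1 l y)) :=
    fun l => ⟨by rw [withDensity_apply _ MeasurableSet.univ, Measure.restrict_univ]; exact hp l⟩
  have pm := measurable_post m0 m1
  have hgm : Measurable[sigmaYi 𝓨 i]
      (fun ω : Equiv.Perm (Fin n) × (Fin n → 𝓨) => post f0 f1 (ω.2 i)) :=
    pm.comp (comap_measurable fun ω : Equiv.Perm (Fin n) × (Fin n → 𝓨) => ω.2 i)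
  have hgm' := hgm.mono ((sigmaYi_le_sigmaY i).trans sigmaY_le) le_rfl
  have hRm : Measurable fun ω : Equiv.Perm (Fin n) × (Fin n → 𝓨) =>
      m (ω.1 i) - post f0 f1 (ω.2 i) := (measurable_param m i).sub hgm'
  have hb : ∀ (l : Fin n) (y : 𝓨), |m l - post f0 f1 y| ≤ 1 := fun l y => by
    obtain ⟨a, b⟩ := post_mem h0 h1 y
    rw [abs_le]; rcases hm l with h | h <;> rw [h] <;> constructor <;> linarith
  have hR : MemLp (fun ω : Equiv.Perm (Fin n) × (Fin n → 𝓨) => m (ω.1 i) - post f0 f1 (ω.2 i)) 2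
      (bayesP ν (dens m f0 f1)) :=
    MemLp.of_bound hRm.aestronglyMeasurable 1 (Filter.Eventually.of_forall fun ω => hb _ _)
  obtain ⟨-, b⟩ := condExp_diff (bayesP ν (dens m f0 f1)) (sigmaYi_le_sigmaY i) sigmaY_le
    (Mpar m i) (fun ω => post f0 f1 (ω.2 i)) 0 (fun ω => m (ω.1 i) - post f0 f1 (ω.2 i))
    (by funext ω; simp [Mpar]) hgm.stronglyMeasurable
    (Integrable.of_bound hgm'.aestronglyMeasurable 1 (Filter.Eventually.of_forall fun ω => by
      rw [Real.norm_of_nonneg (post_mem h0 h1 _).1]; exact (post_mem h0 h1 _).2))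
    (integrable_zero _ _ _) hR (by simp)
  refine b.trans ?_
  suffices H : ∫ ω, (m (ω.1 i) - post f0 f1 (ω.2 i)) ^ 2 ∂(bayesP ν (dens m f0 f1)) ≤ 0 by
    linarith
  rw [integral_bayesP ν _ hp (fun ω => (m (ω.1 i) - post f0 f1 (ω.2 i)) ^ 2) (hRm.pow_const 2) 1
    (fun ω => by rw [abs_pow]; exact pow_le_one₀ (abs_nonneg _) (hb _ _))]
  refine mul_nonpos_of_nonneg_of_nonpos (by positivity) (Finset.sum_nonpos fun π _ => ?_)
  unfold prodDens
  rw [integral_comp_eval (X := fun _ : Fin n => 𝓨)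
    (μ := fun l => ν.withDensity fun y => ENNReal.ofReal (dens m f0 f1 (π l) y)) (i := i)
    (f := fun y => (m (π i) - post f0 f1 y) ^ 2)
    ((pm.const_sub _).pow_const 2).aestronglyMeasurable]
  obtain ⟨c1, c2⟩ := integral_dens_coord ν m0 m1 h0 h1 m hm 0 hc.symm (π i)
  -- On `{0,1} × [0,1]`, `(μ - u)² ≤ (1 - μ) u + μ (1 - u)`.
  have i1 : Integrable (fun y => (1 - m (π i)) * post f0 f1 y)
      (ν.withDensity fun y => ENNReal.ofReal (dens m f0 f1 (π i) y)) :=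
    (Integrable.of_bound pm.aestronglyMeasurable 1 (Filter.Eventually.of_forall fun y => by
      rw [Real.norm_of_nonneg (post_mem h0 h1 _).1]; exact (post_mem h0 h1 _).2)).const_mul _
  have i2 : Integrable (fun y => m (π i) * (1 - post f0 f1 y))
      (ν.withDensity fun y => ENNReal.ofReal (dens m f0 f1 (π i) y)) :=
    (Integrable.of_bound (pm.const_sub 1).aestronglyMeasurable 1
      (Filter.Eventually.of_forall fun y => by
        obtain ⟨a, b⟩ := post_mem h0 h1 y
        rw [Real.norm_of_nonneg (by linarith)]; linarith)).const_mul _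
  have i3 : Integrable (fun y => (m (π i) - post f0 f1 y) ^ 2)
      (ν.withDensity fun y => ENNReal.ofReal (dens m f0 f1 (π i) y)) :=
    Integrable.of_bound ((pm.const_sub _).pow_const 2).aestronglyMeasurable 1
      (Filter.Eventually.of_forall fun y => by
        rw [Real.norm_eq_abs, abs_pow]; exact pow_le_one₀ (abs_nonneg _) (hb _ _))
  refine (integral_mono i3 (i1.add i2) fun y => ?_).trans (le_of_eq ?_)
  · obtain ⟨a, b⟩ := post_mem h0 h1 y
    simp only [Pi.add_apply]
    rcases hm (π i) with h | h <;> rw [h] <;> nlinarith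
  · have := integral_add i1 i2
    simp only [Pi.add_apply]
    rw [this, c1, c2]; ring

/-- The main estimate: with positive overlap and both label frequencies at least `δ`, the gap of
one coordinate is `O(1/n)`. -/
lemma gap_of_overlap_pos (ν : Measure 𝓨) [SigmaFinite ν] (m0 : Measurable f0) (m1 : Measurable f1)
    (h0 : ∀ y, 0 ≤ f0 y) (h1 : ∀ y, 0 ≤ f1 y)
    (p0 : ∫⁻ y, ENNReal.ofReal (f0 y) ∂ν = 1) (p1 : ∫⁻ y, ENNReal.ofReal (f1 y) ∂ν = 1)
    (c : ℝ) (hc : c = ∫ y, post f0 f1 y ∂(ν.withDensity fun y => ENNReal.ofReal (f0 y)))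
    (hc0 : 0 < c) {n : ℕ} (m : Fin n → ℝ) (hm : ∀ j, m j = 0 ∨ m j = 1) (δ : ℝ) (hδ : 0 < δ)
    (hk : δ * n ≤ ∑ j, m j) (hk' : δ * n ≤ ∑ j, (1 - m j)) (i : Fin n) :
    ∫ ω, gap ν m f0 f1 i ω ∂(bayesP ν (dens m f0 f1)) ≤ 16 / (c ^ 2 * δ ^ 2) / n := by
  have hp : ∀ l, ∫⁻ y, ENNReal.ofReal (dens m f0 f1 l y) ∂ν = 1 := fun l => by
    unfold dens; split_ifs <;> assumption
  have := isProb_bayesP ν _ hp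
  have hn : (0 : ℝ) < n := by exact_mod_cast i.pos
  set k1 := ∑ j, m j with hk1
  set k0 := ∑ j, (1 - m j) with hk0
  set P := bayesP ν (dens m f0 f1) with hP
  have pm := measurable_post m0 m1
  let D : 𝓨 → ℝ := fun y => (1 - post f0 f1 y) * k0 + post f0 f1 y * k1
  have hDm : Measurable D := ((pm.const_sub 1).mul_const _).add (pm.mul_const _)
  have hD : ∀ y, δ * n ≤ D y := fun y => by
    obtain ⟨a, b⟩ := post_mem h0 h1 y
    simp only [D]
    nlinarith [mul_le_mul_of_nonneg_left hk a, mul_le_mul_of_nonneg_left hk' (sub_nonneg.2 b)]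
  have hδn : 0 < δ * n := by positivity
  have hDpos : ∀ y, 0 < D y := fun y => hδn.trans_le (hD y)
  have hinv : ∀ y, |(c * D y)⁻¹| ≤ (c * (δ * n))⁻¹ := fun y => by
    rw [abs_of_nonneg (inv_nonneg.2 (mul_pos hc0 (hDpos y)).le)]
    exact inv_anti₀ (by positivity) (mul_le_mul_of_nonneg_left (hD y) hc0.le)
  have hum : ∀ l, Measurable fun ω : Equiv.Perm (Fin n) × (Fin n → 𝓨) => post f0 f1 (ω.2 l) :=
    fun l => pm.comp ((measurable_pi_apply l).comp measurable_snd)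
  -- `Z0` and `Z1` are the centred overlap statistics of the two groups of observations.
  let Z0 : Equiv.Perm (Fin n) × (Fin n → 𝓨) → ℝ := fun ω =>
    ∑ l, (1 - m (ω.1 l)) * post f0 f1 (ω.2 l) - k0 * c
  let Z1 : Equiv.Perm (Fin n) × (Fin n → 𝓨) → ℝ := fun ω =>
    ∑ l, m (ω.1 l) * (1 - post f0 f1 (ω.2 l)) - k1 * c
  have hs0 : Measurable fun ω : Equiv.Perm (Fin n) × (Fin n → 𝓨) =>
      ∑ l, (1 - m (ω.1 l)) * post f0 f1 (ω.2 l) :=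
    Finset.measurable_sum _ fun l _ => ((measurable_param m l).const_sub 1).mul (hum l)
  have hs1 : Measurable fun ω : Equiv.Perm (Fin n) × (Fin n → 𝓨) =>
      ∑ l, m (ω.1 l) * (1 - post f0 f1 (ω.2 l)) :=
    Finset.measurable_sum _ fun l _ => (measurable_param m l).mul ((hum l).const_sub 1)
  have hZ0m : Measurable Z0 := hs0.sub_const _
  have hZ1m : Measurable Z1 := hs1.sub_const _
  have V0 : ∫ ω, (Z0 ω) ^ 2 ∂P ≤ n := by
    refine integral_sum_sq_le ν _ hp (fun j y => (1 - m j) * post f0 f1 y)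
      (fun j => pm.const_mul _) (fun j y => ?_) hs0 (k0 * c) ?_
    · obtain ⟨a, b⟩ := post_mem h0 h1 y
      rcases hm j with h | h <;> simp [h, a, b]
    · rw [hk0, Finset.sum_mul]
      exact Finset.sum_congr rfl fun j _ => (integral_dens_coord ν m0 m1 h0 h1 m hm c hc j).1.symm
  have V1 : ∫ ω, (Z1 ω) ^ 2 ∂P ≤ n := by
    refine integral_sum_sq_le ν _ hp (fun j y => m j * (1 - post f0 f1 y))
      (fun j => (pm.const_sub 1).const_mul _) (fun j y => ?_) hs1 (k1 * c) ?_
    · obtain ⟨a, b⟩ := post_mem h0 h1 y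
      rcases hm j with h | h <;> simp [h, a, b]
    · rw [hk1, Finset.sum_mul]
      exact Finset.sum_congr rfl fun j _ => (integral_dens_coord ν m0 m1 h0 h1 m hm c hc j).2.symm
  have bdd : ∀ (a : Fin n → ℝ) (K : ℝ), (∀ l, a l ∈ Set.Icc (0 : ℝ) 1) →
      |∑ l, a l - K| ≤ n + |K| := fun a K ha => by
    refine (abs_sub _ _).trans (add_le_add_left ?_ _)
    rw [abs_of_nonneg (Finset.sum_nonneg fun l _ => (ha l).1)]
    exact (Finset.sum_le_sum fun l _ => (ha l).2).trans (by simp)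
  have B0 : ∀ ω, |Z0 ω| ≤ n + |k0 * c| := fun ω => bdd _ _ fun l => by
    obtain ⟨a, b⟩ := post_mem h0 h1 (ω.2 l)
    rcases hm (ω.1 l) with h | h <;> simp [h, a, b]
  have B1 : ∀ ω, |Z1 ω| ≤ n + |k1 * c| := fun ω => bdd _ _ fun l => by
    obtain ⟨a, b⟩ := post_mem h0 h1 (ω.2 l)
    rcases hm (ω.1 l) with h | h <;> simp [h, a, b]
  have L0 : MemLp Z0 2 P :=
    MemLp.of_bound hZ0m.aestronglyMeasurable _ (Filter.Eventually.of_forall B0)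
  have L1 : MemLp Z1 2 P :=
    MemLp.of_bound hZ1m.aestronglyMeasurable _ (Filter.Eventually.of_forall B1)
  let R : Equiv.Perm (Fin n) × (Fin n → 𝓨) → ℝ := fun ω =>
    (c * D (ω.2 i))⁻¹ * (post f0 f1 (ω.2 i) * (1 - m (ω.1 i)) * Z1 ω
      - (1 - post f0 f1 (ω.2 i)) * m (ω.1 i) * Z0 ω)
  have hRm : Measurable R :=
    ((hDm.comp ((measurable_pi_apply i).comp measurable_snd)).const_mul c).inv.mul
      ((((hum i).mul ((measurable_param m i).const_sub 1)).mul hZ1m).sub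
        ((((hum i).const_sub 1).mul (measurable_param m i)).mul hZ0m))
  have hRle : ∀ ω, |R ω| ≤ (c * (δ * n))⁻¹ * (|Z0 ω| + |Z1 ω|) := fun ω => by
    simp only [R]
    rw [abs_mul]
    refine mul_le_mul (hinv _) ?_ (abs_nonneg _) (by positivity)
    obtain ⟨a, b⟩ := post_mem h0 h1 (ω.2 i)
    rcases hm (ω.1 i) with h | h <;> rw [h]
    · rw [show post f0 f1 (ω.2 i) * (1 - 0) * Z1 ω - (1 - post f0 f1 (ω.2 i)) * 0 * Z0 ω =
        post f0 f1 (ω.2 i) * Z1 ω by ring, abs_mul, abs_of_nonneg a]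
      nlinarith [abs_nonneg (Z0 ω), abs_nonneg (Z1 ω)]
    · rw [show post f0 f1 (ω.2 i) * (1 - 1) * Z1 ω - (1 - post f0 f1 (ω.2 i)) * 1 * Z0 ω =
        -((1 - post f0 f1 (ω.2 i)) * Z0 ω) by ring, abs_neg, abs_mul,
        abs_of_nonneg (by linarith : 0 ≤ 1 - post f0 f1 (ω.2 i))]
      nlinarith [abs_nonneg (Z0 ω), abs_nonneg (Z1 ω)]
  have hR : MemLp R 2 P := by
    refine MemLp.of_bound hRm.aestronglyMeasurable
      ((c * (δ * n))⁻¹ * ((n + |k0 * c|) + (n + |k1 * c|))) (Filter.Eventually.of_forall fun ω => ?_)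
    exact (hRle ω).trans (mul_le_mul_of_nonneg_left (add_le_add (B0 ω) (B1 ω)) (by positivity))
  have hR2 : ∫ ω, (R ω) ^ 2 ∂P ≤ 4 / (c ^ 2 * δ ^ 2) / n := by
    have J0 := L0.integrable_sq
    have J1 := L1.integrable_sq
    have e : ∫ ω, (2 * ((c * (δ * n))⁻¹) ^ 2) * ((Z0 ω) ^ 2 + (Z1 ω) ^ 2) ∂P =
        (2 * ((c * (δ * n))⁻¹) ^ 2) * (∫ ω, (Z0 ω) ^ 2 ∂P + ∫ ω, (Z1 ω) ^ 2 ∂P) := by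
      rw [integral_const_mul, integral_add J0 J1]
    have : ∫ ω, (R ω) ^ 2 ∂P ≤
        ∫ ω, (2 * ((c * (δ * n))⁻¹) ^ 2) * ((Z0 ω) ^ 2 + (Z1 ω) ^ 2) ∂P := by
      refine integral_mono hR.integrable_sq ((J0.add J1).const_mul _) fun ω => ?_
      change (R ω) ^ 2 ≤ (2 * ((c * (δ * n))⁻¹) ^ 2) * ((Z0 ω) ^ 2 + (Z1 ω) ^ 2)
      have h2 := pow_le_pow_left₀ (abs_nonneg _) (hRle ω) 2
      rw [sq_abs, mul_pow (c * (δ * n))⁻¹] at h2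
      refine h2.trans ?_
      have h3 : (|Z0 ω| + |Z1 ω|) ^ 2 ≤ 2 * ((Z0 ω) ^ 2 + (Z1 ω) ^ 2) := by
        nlinarith [sq_nonneg (|Z0 ω| - |Z1 ω|), sq_abs (Z0 ω), sq_abs (Z1 ω)]
      nlinarith [mul_le_mul_of_nonneg_left h3 (sq_nonneg ((c * (δ * n))⁻¹))]
    rw [e] at this
    refine this.trans ((mul_le_mul_of_nonneg_left (add_le_add V0 V1) (by positivity)).trans
      (le_of_eq ?_))
    field_simp
    ring
  let g : 𝓨 → ℝ := fun y => post f0 f1 y * k1 / D y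
  have hgm : Measurable g := (pm.mul_const _).div hDm
  have hgY : Measurable[sigmaYi 𝓨 i]
      (fun ω : Equiv.Perm (Fin n) × (Fin n → 𝓨) => g (ω.2 i)) :=
    hgm.comp (comap_measurable fun ω : Equiv.Perm (Fin n) × (Fin n → 𝓨) => ω.2 i)
  have hgi : Integrable (fun ω : Equiv.Perm (Fin n) × (Fin n → 𝓨) => g (ω.2 i)) P := by
    refine Integrable.of_bound (hgm.comp
      ((measurable_pi_apply i).comp measurable_snd)).aestronglyMeasurable 1
      (Filter.Eventually.of_forall fun ω => ?_)
    obtain ⟨a, b⟩ := post_mem h0 h1 (ω.2 i)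
    have hk1' : 0 ≤ k1 := hδn.le.trans hk
    have hk0' : 0 ≤ k0 := hδn.le.trans hk'
    rw [Real.norm_of_nonneg (div_nonneg (mul_nonneg a hk1') (hDpos _).le)]
    refine div_le_one_of_le₀ ?_ (hDpos _).le
    simp only [D]
    nlinarith [mul_nonneg (sub_nonneg.2 b) hk0']
  have hX := fun j => condExp_exch ν m0 m1 h0 h1 p0 p1 m hm i j (fun y => (c * D (y i))⁻¹)
    ((hDm.comp (measurable_pi_apply i)).const_mul c).inv _ (fun y => hinv (y i))
  have hXs : P[∑ j, fun ω => (c * D (ω.2 i))⁻¹ * exch f0 f1 m i j ω|sigmaY 𝓨 n] =ᵐ[P] 0 := by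
    refine (condExp_finsetSum (fun j _ => (hX j).1) _).trans ?_
    have : ∀ᵐ ω ∂P, ∀ j, P[fun ω => (c * D (ω.2 i))⁻¹ * exch f0 f1 m i j ω|sigmaY 𝓨 n] ω = 0 :=
      ae_all_iff.2 fun j => (hX j).2
    filter_upwards [this] with ω hω
    rw [Finset.sum_apply]
    exact Finset.sum_eq_zero fun j _ => hω j
  obtain ⟨-, b⟩ := condExp_diff P (sigmaYi_le_sigmaY i) sigmaY_le
    (Mpar m i) (fun ω => g (ω.2 i)) (∑ j, fun ω => (c * D (ω.2 i))⁻¹ * exch f0 f1 m i j ω) R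
    (by
      funext ω
      simp only [Pi.add_apply, Finset.sum_apply, Mpar, R, g]
      have hs : ∑ j, exch f0 f1 m i j ω =
          m (ω.1 i) * (1 - post f0 f1 (ω.2 i)) * (Z0 ω + k0 * c)
            - (1 - m (ω.1 i)) * post f0 f1 (ω.2 i) * (Z1 ω + k1 * c) := by
        simp only [Z0, Z1, exch, sub_add_cancel, Finset.mul_sum, ← Finset.sum_sub_distrib]
        exact Finset.sum_congr rfl fun j _ => by ring
      rw [← Finset.mul_sum, hs]
      have hDi := (hDpos (ω.2 i)).ne'
      have hD' : D (ω.2 i) = (1 - post f0 f1 (ω.2 i)) * k0 + post f0 f1 (ω.2 i) * k1 := rfl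
      field_simp
      rw [hD']
      ring)
    hgY.stronglyMeasurable hgi (integrable_finsetSum' _ fun j _ => (hX j).1) hR hXs
  refine b.trans ((mul_le_mul_of_nonneg_left hR2 (by norm_num)).trans (le_of_eq ?_))
  ring

end

/-- two-valued parameter, one-sided moment condition.  If `f1/f0` has finite
variance under `f0` and `(Σ_i μ_i^{(n)})/n → γ ∈ (0,1)`, then
`E Σ_i (E(M_i|Y_i) − E(M_i|Y_{1:n}))²` is bounded in `n`. -/
theorem stmt_5 {𝓨 : Type} [MeasurableSpace 𝓨] (ν : Measure 𝓨) [SigmaFinite ν]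
    (f0 f1 : 𝓨 → ℝ) (hf0_meas : Measurable f0) (hf1_meas : Measurable f1)
    (hf0_nonneg : ∀ y, 0 ≤ f0 y) (hf1_nonneg : ∀ y, 0 ≤ f1 y)
    (hf0_prob : ∫⁻ y, ENNReal.ofReal (f0 y) ∂ν = 1)
    (hf1_prob : ∫⁻ y, ENNReal.ofReal (f1 y) ∂ν = 1)
    (hvar : evariance (fun y => f1 y / f0 y)
      (ν.withDensity fun y => ENNReal.ofReal (f0 y)) ≠ ⊤)
    (μseq : ∀ n : ℕ, Fin n → ℝ) (hμ01 : ∀ n i, μseq n i = 0 ∨ μseq n i = 1)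
    (γ : ℝ) (hγ0 : 0 < γ) (hγ1 : γ < 1)
    (hfreq : Filter.Tendsto (fun n => (∑ i, μseq n i) / n) Filter.atTop (nhds γ)) :
    ∃ C : ℝ, ∀ n : ℕ,
      ∫ ω, ∑ i,
          (((bayesP ν (fun j y => if μseq n j = 1 then f1 y else f0 y))[Mpar (μseq n) i|
              sigmaYi 𝓨 i]) ω
            - ((bayesP ν (fun j y => if μseq n j = 1 then f1 y else f0 y))[Mpar (μseq n) i|
              sigmaY 𝓨 n]) ω) ^ 2
        ∂(bayesP ν (fun j y => if μseq n j = 1 then f1 y else f0 y)) ≤ C := by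
  set δ : ℝ := min (γ / 2) ((1 - γ) / 2) with hδ
  have hδ0 : 0 < δ := lt_min (by linarith) (by linarith)
  set c := ∫ y, post f0 f1 y ∂(ν.withDensity fun y => ENNReal.ofReal (f0 y)) with hc
  have hc0 : 0 ≤ c := integral_nonneg fun y => (post_mem hf0_nonneg hf1_nonneg y).1
  have ev : ∀ᶠ n : ℕ in Filter.atTop,
      δ * n ≤ ∑ i, μseq n i ∧ δ * n ≤ ∑ i, (1 - μseq n i) := by
    have e1 := hfreq.eventually (lt_mem_nhds (show γ / 2 < γ by linarith))
    have e2 := hfreq.eventually (gt_mem_nhds (show γ < (1 + γ) / 2 by linarith))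
    filter_upwards [e1, e2, Filter.eventually_gt_atTop 0] with n a1 a2 hn
    have hn' : (0 : ℝ) < n := by exact_mod_cast hn
    rw [lt_div_iff₀ hn'] at a1
    rw [div_lt_iff₀ hn'] at a2
    have d1 : δ * n ≤ γ / 2 * n := mul_le_mul_of_nonneg_right (min_le_left _ _) hn'.le
    have d2 : δ * n ≤ (1 - γ) / 2 * n := mul_le_mul_of_nonneg_right (min_le_right _ _) hn'.le
    refine ⟨by linarith, ?_⟩
    rw [Finset.sum_sub_distrib]
    simp only [Finset.sum_const, Finset.card_univ, Fintype.card_fin, nsmul_eq_mul, mul_one]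
    linarith
  obtain ⟨N, hN⟩ := Filter.eventually_atTop.1 ev
  set K : ℝ := 16 / (c ^ 2 * δ ^ 2) with hK
  have hK0 : 0 ≤ K := by positivity
  refine ⟨4 * N + K, fun n => ?_⟩
  have tr := fun i => gap_trivial ν hf0_prob hf1_prob (μseq n) (hμ01 n) i
  change ∫ ω, ∑ i, gap ν (μseq n) f0 f1 i ω ∂(bayesP ν (dens (μseq n) f0 f1)) ≤ 4 * N + K
  rw [integral_finsetSum _ fun i _ => (tr i).1]
  rcases lt_or_ge n N with h | h
  · refine (Finset.sum_le_sum fun i _ => (tr i).2).trans ?_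
    simp only [Finset.sum_const, Finset.card_univ, Fintype.card_fin, nsmul_eq_mul]
    have : (n : ℝ) ≤ N := by exact_mod_cast h.le
    linarith
  · have hg : ∀ i, ∫ ω, gap ν (μseq n) f0 f1 i ω ∂(bayesP ν (dens (μseq n) f0 f1)) ≤ K / n := by
      intro i
      rcases hc0.eq_or_lt with hz | hpos
      · exact (gap_of_overlap_zero ν hf0_meas hf1_meas hf0_nonneg hf1_nonneg hf0_prob hf1_prob
          hz.symm (μseq n) (hμ01 n) i).trans (by positivity)
      · exact gap_of_overlap_pos ν hf0_meas hf1_meas hf0_nonneg hf1_nonneg hf0_prob hf1_prob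
          c hc hpos (μseq n) (hμ01 n) δ hδ0 (hN n h).1 (hN n h).2 i
    refine (Finset.sum_le_sum fun i _ => hg i).trans ?_
    simp only [Finset.sum_const, Finset.card_univ, Fintype.card_fin, nsmul_eq_mul]
    have : (n : ℝ) * (K / n) ≤ K := by
      rcases eq_or_ne (n : ℝ) 0 with hz | hz
      · simpa [hz] using hK0
      · rw [mul_div_cancel₀ K hz]
    have : (0 : ℝ) ≤ N := Nat.cast_nonneg N
    linarith
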